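/- (Chen–Yu) For every integer i ≥ 2, the length of the longest path between the outer vertices x and y in the Moon–Moser graph T_i is exactly 3·2^{i-1}; in particular, every path in T_i from x to y has length at most 3·2^{i-1}, and some x–y path attains this length. -/

import Mathlib

/-- A state in the recursive construction of the Moon–Moser graphs `T_i`:
`faces` is the list of inner triangular faces (each a triple of vertices),
`next` is the label of the next vertex to be added (so the vertices used so far
are `0, 1, ..., next - 1`), and `edges` is the set of edges built so far. -/
structure MMState where
  faces : List (ℕ × ℕ × ℕ)
  next : ℕ
  edges : Finset (Sym2 ℕ)

/-- The initial state: `T_1 = K_4` on vertices `0, 1, 2, 3`, with outer triangle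
`x = 0`, `y = 1`, `z = 2`; its inner faces are the three triangles containing `3`. -/
def MMinit : MMState where
  faces := [(0, 1, 3), (0, 2, 3), (1, 2, 3)]
  next := 4
  edges := {s(0, 1), s(0, 2), s(0, 3), s(1, 2), s(1, 3), s(2, 3)}

/-- One step of the Moon–Moser construction: into each inner triangular face insert a
new vertex joined to the three vertices of that face; each face is replaced by three
new inner faces. -/
def MMstep (st : MMState) : MMState where
  faces := ((st.faces.zipIdx.map Prod.swap).map (fun p =>
    let v := st.next + p.1
    [(p.2.1, p.2.2.1, v), (p.2.1, p.2.2.2, v), (p.2.2.1, p.2.2.2, v)])).flatten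
  next := st.next + st.faces.length
  edges := st.edges ∪ (((st.faces.zipIdx.map Prod.swap).map (fun p =>
    let v := st.next + p.1
    [s(p.2.1, v), s(p.2.2.1, v), s(p.2.2.2, v)])).flatten).toFinset

/-- The state after constructing `T_i` (for `i ≥ 1`). -/
def MMstate (i : ℕ) : MMState := MMstep^[i - 1] MMinit

/-- The number of vertices of the Moon–Moser graph `T_i` (its vertices being
`0, 1, ..., MMvertexCount i - 1`). -/
def MMvertexCount (i : ℕ) : ℕ := (MMstate i).next

/-- The Moon–Moser graph `T_i` (as a simple graph on `ℕ`); its outer triangle is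
`x = 0`, `y = 1`, `z = 2`. -/
def MoonMoser (i : ℕ) : SimpleGraph ℕ :=
  SimpleGraph.fromEdgeSet ((MMstate i).edges : Set (Sym2 ℕ))

namespace MMaux

/-- Membership of a vertex in a face. -/
def In (x : ℕ) (f : ℕ × ℕ × ℕ) : Prop := x = f.1 ∨ x = f.2.1 ∨ x = f.2.2

/-- The three vertices of a face are distinct. -/
def Dist (f : ℕ × ℕ × ℕ) : Prop := f.1 ≠ f.2.1 ∧ f.1 ≠ f.2.2 ∧ f.2.1 ≠ f.2.2

/-- The graph of a state. -/
def Gr (st : MMState) : SimpleGraph ℕ := SimpleGraph.fromEdgeSet (st.edges : Set (Sym2 ℕ))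

/-- `g` is one of the three faces created by inserting `w` into `f`. -/
def Sub (f : ℕ × ℕ × ℕ) (w : ℕ) (g : ℕ × ℕ × ℕ) : Prop :=
  g = (f.1, f.2.1, w) ∨ g = (f.1, f.2.2, w) ∨ g = (f.2.1, f.2.2, w)

theorem mem_faces (st : MMState) (g : ℕ × ℕ × ℕ) :
    g ∈ (MMstep st).faces ↔ ∃ k f, st.faces[k]? = some f ∧ Sub f (st.next + k) g := by
  simp only [MMstep, List.mem_flatten, List.mem_map, Prod.exists, Sub]
  constructor
  · rintro ⟨l, ⟨k, a, b, c, ⟨⟨a', b', c', k', hm, hs⟩, rfl⟩⟩, hg⟩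
    rw [List.mem_zipIdx_iff_getElem?] at hm
    simp only [Prod.swap_prod_mk, Prod.mk.injEq] at hs
    obtain ⟨rfl, rfl, rfl, rfl⟩ := hs
    exact ⟨_, _, _, _, hm, by simpa using hg⟩
  · rintro ⟨k, a, b, c, hf, hg⟩
    refine ⟨_, ⟨k, a, b, c, ⟨a, b, c, k, ?_, rfl⟩, rfl⟩, by simpa using hg⟩
    rw [List.mem_zipIdx_iff_getElem?]; exact hf

theorem mem_edges (st : MMState) (e : Sym2 ℕ) :
    e ∈ (MMstep st).edges ↔ e ∈ st.edges ∨
      ∃ k f x, st.faces[k]? = some f ∧ In x f ∧ e = s(x, st.next + k) := by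
  simp only [MMstep, Finset.mem_union, List.mem_toFinset, List.mem_flatten, List.mem_map,
    Prod.exists, In]
  refine or_congr Iff.rfl ?_
  constructor
  · rintro ⟨l, ⟨k, a, b, c, ⟨⟨a', b', c', k', hm, hs⟩, rfl⟩⟩, hg⟩
    rw [List.mem_zipIdx_iff_getElem?] at hm
    simp only [Prod.swap_prod_mk, Prod.mk.injEq] at hs
    obtain ⟨rfl, rfl, rfl, rfl⟩ := hs
    simp only [List.mem_cons, List.not_mem_nil, or_false] at hg
    rcases hg with h | h | h
    · exact ⟨_, _, _, _, _, hm, Or.inl rfl, h⟩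
    · exact ⟨_, _, _, _, _, hm, Or.inr (Or.inl rfl), h⟩
    · exact ⟨_, _, _, _, _, hm, Or.inr (Or.inr rfl), h⟩
  · rintro ⟨k, a, b, c, x, hf, hx, rfl⟩
    refine ⟨_, ⟨k, a, b, c, ⟨a, b, c, k, ?_, rfl⟩, rfl⟩, ?_⟩
    · rw [List.mem_zipIdx_iff_getElem?]; exact hf
    · simp only [List.mem_cons, List.not_mem_nil, or_false]
      rcases hx with rfl | rfl | rfl <;> simp

/-- Invariant of the construction. -/
structure Inv (st : MMState) : Prop where
  lt : ∀ a b, s(a, b) ∈ st.edges → a < st.next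
  flt : ∀ f ∈ st.faces, ∀ x, In x f → x < st.next
  dist : ∀ f ∈ st.faces, Dist f
  fe : ∀ f ∈ st.faces, ∀ x y, In x f → In y f → x ≠ y → s(x, y) ∈ st.edges

theorem inv_init : Inv MMinit := by
  constructor
  · intro a b h
    simp only [MMinit, Finset.mem_insert, Finset.mem_singleton, Sym2.eq_iff] at h ⊢
    omega
  · intro f hf x hx
    simp only [MMinit, List.mem_cons, List.not_mem_nil, or_false] at hf ⊢
    rcases hf with rfl | rfl | rfl <;> simp only [In] at hx <;> omega
  · intro f hf
    simp only [MMinit, List.mem_cons, List.not_mem_nil, or_false] at hf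
    rcases hf with rfl | rfl | rfl <;> simp [Dist]
  · intro f hf x y hx hy hxy
    simp only [MMinit, List.mem_cons, List.not_mem_nil, or_false] at hf
    simp only [MMinit, Finset.mem_insert, Finset.mem_singleton, Sym2.eq_iff]
    rcases hf with rfl | rfl | rfl <;> simp only [In] at hx hy <;>
      rcases hx with rfl | rfl | rfl <;> rcases hy with rfl | rfl | rfl <;> simp at hxy ⊢

theorem in_sub {f g : ℕ × ℕ × ℕ} {w x : ℕ} (h : Sub f w g) (hx : In x g) : In x f ∨ x = w := by
  rcases h with rfl | rfl | rfl <;> simp only [In] at * <;> tauto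

theorem inv_step {st : MMState} (h : Inv st) : Inv (MMstep st) := by
  have hn : (MMstep st).next = st.next + st.faces.length := rfl
  constructor
  · intro a b hab
    rw [hn]
    rcases (mem_edges _ _).1 hab with h1 | ⟨k, f, x, hf, hx, he⟩
    · have := h.lt a b h1; omega
    · have := h.flt f (List.mem_of_getElem? hf) x hx
      obtain ⟨hk, -⟩ := List.getElem?_eq_some_iff.1 hf
      rcases Sym2.eq_iff.1 he with ⟨rfl, rfl⟩ | ⟨rfl, rfl⟩ <;> omega
  · intro g hg x hx
    obtain ⟨k, f, hf, hs⟩ := (mem_faces _ _).1 hg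
    obtain ⟨hk, -⟩ := List.getElem?_eq_some_iff.1 hf
    rw [hn]
    rcases in_sub hs hx with h1 | h1
    · have := h.flt f (List.mem_of_getElem? hf) x h1; omega
    · omega
  · intro g hg
    obtain ⟨k, f, hf, hs⟩ := (mem_faces _ _).1 hg
    have hm := List.mem_of_getElem? hf
    have h1 := h.flt f hm f.1 (Or.inl rfl)
    have h2 := h.flt f hm f.2.1 (Or.inr (Or.inl rfl))
    have h3 := h.flt f hm f.2.2 (Or.inr (Or.inr rfl))
    obtain ⟨d1, d2, d3⟩ := h.dist f hm
    rcases hs with rfl | rfl | rfl <;> simp only [Dist] <;> omega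
  · intro g hg x y hx hy hxy
    obtain ⟨k, f, hf, hs⟩ := (mem_faces _ _).1 hg
    have hm := List.mem_of_getElem? hf
    rw [mem_edges]
    rcases in_sub hs hx with h1 | rfl <;> rcases in_sub hs hy with h2 | rfl
    · exact Or.inl (h.fe f hm x y h1 h2 hxy)
    · exact Or.inr ⟨k, f, x, hf, h1, rfl⟩
    · exact Or.inr ⟨k, f, y, hf, h2, Sym2.eq_swap⟩
    · exact absurd rfl hxy

/-- Contracting a path of the next graph to a path of the current graph. -/
theorem contract {st : MMState} (h : Inv st) : ∀ (n : ℕ) {u v : ℕ} (p : (Gr (MMstep st)).Walk u v),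
    p.length ≤ n → p.IsPath → u < st.next → v < st.next →
    ∃ q : (Gr st).Walk u v, q.IsPath ∧ q.support ⊆ p.support ∧ p.length ≤ 2 * q.length := by
  intro n
  induction n with
  | zero =>
    intro u v p hn hp hu hv
    cases p with
    | nil => exact ⟨.nil, by simp, by simp, by simp⟩
    | cons _ _ => simp at hn
  | succ n ih =>
    intro u v p hn hp hu hv
    cases p with
    | nil => exact ⟨.nil, by simp, by simp, by simp⟩
    | @cons _ w _ hadj p' =>
      rw [SimpleGraph.Walk.cons_isPath_iff] at hp
      obtain ⟨hp', hup⟩ := hp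
      simp only [SimpleGraph.Walk.length_cons] at hn
      have hadj' := hadj
      simp only [Gr, SimpleGraph.fromEdgeSet_adj, Finset.mem_coe] at hadj'
      obtain ⟨he, hne⟩ := hadj'
      rcases (mem_edges _ _).1 he with h1 | ⟨k, f, x, hf, hx, he'⟩
      · have hw : w < st.next := h.lt w u (by rwa [Sym2.eq_swap])
        obtain ⟨q, hq, hs, hl⟩ := ih p' (by omega) hp' hw hv
        have ha : (Gr st).Adj u w := by
          simp only [Gr, SimpleGraph.fromEdgeSet_adj, Finset.mem_coe]; exact ⟨h1, hne⟩
        refine ⟨.cons ha q, ?_, ?_, ?_⟩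
        · rw [SimpleGraph.Walk.cons_isPath_iff]; exact ⟨hq, fun hh => hup (hs hh)⟩
        · simp only [SimpleGraph.Walk.support_cons]
          exact List.cons_subset_cons _ hs
        · simp only [SimpleGraph.Walk.length_cons]; omega
      · have hm := List.mem_of_getElem? hf
        have hxl := h.flt f hm x hx
        rcases Sym2.eq_iff.1 he' with ⟨rfl, rfl⟩ | ⟨rfl, rfl⟩
        swap
        · omega
        cases p' with
        | nil => omega
        | @cons _ y _ hadj2 p'' =>
          rw [SimpleGraph.Walk.cons_isPath_iff] at hp'
          obtain ⟨hp'', hwp⟩ := hp'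
          simp only [SimpleGraph.Walk.length_cons] at hn
          have hadj2' := hadj2
          simp only [Gr, SimpleGraph.fromEdgeSet_adj, Finset.mem_coe] at hadj2'
          obtain ⟨he2, hne2⟩ := hadj2'
          rcases (mem_edges _ _).1 he2 with h2 | ⟨k2, f2, x2, hf2, hx2, he2'⟩
          · have := h.lt _ _ h2; omega
          · have hm2 := List.mem_of_getElem? hf2
            have hxl2 := h.flt f2 hm2 x2 hx2
            rcases Sym2.eq_iff.1 he2' with ⟨h3, h4⟩ | ⟨h3, h4⟩
            · omega
            obtain rfl : k = k2 := by omega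
            subst h4
            rw [hf] at hf2
            obtain rfl := Option.some.inj hf2
            simp only [SimpleGraph.Walk.support_cons, List.mem_cons, not_or] at hup
            obtain ⟨q, hq, hs, hl⟩ := ih p'' (by omega) hp'' hxl2 hv
            have huy : u ≠ y := by
              rintro rfl; exact hup.2 p''.start_mem_support
            have ha : (Gr st).Adj u y := by
              simp only [Gr, SimpleGraph.fromEdgeSet_adj, Finset.mem_coe]
              exact ⟨h.fe f hm u y hx hx2 huy, huy⟩
            refine ⟨.cons ha q, ?_, ?_, ?_⟩
            · rw [SimpleGraph.Walk.cons_isPath_iff]; exact ⟨hq, fun hh => hup.2 (hs hh)⟩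
            · simp only [SimpleGraph.Walk.support_cons]
              exact List.cons_subset_cons _ (fun a ha => List.mem_cons_of_mem _ (hs ha))
            · simp only [SimpleGraph.Walk.length_cons]; omega

theorem support_lt {st : MMState} (h : Inv st) {u v : ℕ} (p : (Gr st).Walk u v)
    (hu : u < st.next) : ∀ x ∈ p.support, x < st.next := by
  induction p with
  | nil => simpa using hu
  | @cons a b c hadj p ih =>
    simp only [Gr, SimpleGraph.fromEdgeSet_adj, Finset.mem_coe] at hadj
    have := h.lt b a (by rw [Sym2.eq_swap]; exact hadj.1)
    intro x hx
    rw [SimpleGraph.Walk.support_cons, List.mem_cons] at hx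
    rcases hx with rfl | hx
    · exact hu
    · exact ih this x hx

/-- A path given by its support and a list of faces containing its edges. -/
inductive Good (st : MMState) : ℕ → ℕ → List ℕ → List (ℕ × ℕ × ℕ) → Prop
  | nil (u : ℕ) : Good st u u [u] []
  | cons {u v w : ℕ} {S : List ℕ} {fs : List (ℕ × ℕ × ℕ)} (f : ℕ × ℕ × ℕ) (hf : f ∈ st.faces)
      (hu : In u f) (hv : In v f) (hne : u ≠ v) (hg : Good st v w S fs) :
      Good st u w (u :: S) (f :: fs)

theorem Good.walk {st : MMState} (h : Inv st) {u v : ℕ} {S : List ℕ} {fs : List (ℕ × ℕ × ℕ)}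
    (hg : Good st u v S fs) : ∃ p : (Gr st).Walk u v, p.support = S ∧ p.length = fs.length := by
  induction hg with
  | nil u => exact ⟨.nil, by simp, by simp⟩
  | @cons u v w S fs f hf hu hv hne hg ih =>
    obtain ⟨p, hp, hl⟩ := ih
    have ha : (Gr st).Adj u v := by
      simp only [Gr, SimpleGraph.fromEdgeSet_adj, Finset.mem_coe]
      exact ⟨h.fe f hf u v hu hv hne, hne⟩
    exact ⟨.cons ha p, by simp [hp], by simp [hl]⟩

theorem split {f : ℕ × ℕ × ℕ} (hd : Dist f) {u v : ℕ} (w : ℕ) (hu : In u f) (hv : In v f)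
    (hne : u ≠ v) : ∃ g1 g2, Sub f w g1 ∧ Sub f w g2 ∧ g1 ≠ g2 ∧ In u g1 ∧ In w g1 ∧
      In w g2 ∧ In v g2 := by
  obtain ⟨a, b, c⟩ := f
  simp only [Dist, In] at hd hu hv
  obtain ⟨d1, d2, d3⟩ := hd
  rcases hu with rfl | rfl | rfl <;> rcases hv with rfl | rfl | rfl
  · exact absurd rfl hne
  · exact ⟨(u, c, w), (v, c, w), by simp [Sub], by simp [Sub], by simp [hne], by simp [In],
      by simp [In], by simp [In], by simp [In]⟩
  · exact ⟨(u, b, w), (b, v, w), by simp [Sub], by simp [Sub], by simp [d1], by simp [In],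
      by simp [In], by simp [In], by simp [In]⟩
  · exact ⟨(u, c, w), (v, c, w), by simp [Sub], by simp [Sub], by simp [hne], by simp [In],
      by simp [In], by simp [In], by simp [In]⟩
  · exact absurd rfl hne
  · exact ⟨(a, u, w), (a, v, w), by simp [Sub], by simp [Sub], by simp [hne], by simp [In],
      by simp [In], by simp [In], by simp [In]⟩
  · exact ⟨(b, u, w), (v, b, w), by simp [Sub], by simp [Sub], by simp [d1.symm], by simp [In],
      by simp [In], by simp [In], by simp [In]⟩
  · exact ⟨(a, u, w), (a, v, w), by simp [Sub], by simp [Sub], by simp [hne], by simp [In],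
      by simp [In], by simp [In], by simp [In]⟩
  · exact absurd rfl hne

theorem Good.step {st : MMState} (h : Inv st) {u v : ℕ} {S : List ℕ} {fs : List (ℕ × ℕ × ℕ)}
    (hg : Good st u v S fs) (hS : S.Nodup) (hfs : fs.Nodup) (hlt : ∀ x ∈ S, x < st.next) :
    ∃ S' fs', Good (MMstep st) u v S' fs' ∧ S'.Nodup ∧ fs'.Nodup ∧ fs'.length = 2 * fs.length ∧
      (∀ x ∈ S', x ∈ S ∨ ∃ k f, st.faces[k]? = some f ∧ f ∈ fs ∧ x = st.next + k) ∧
      (∀ g ∈ fs', ∃ k f, st.faces[k]? = some f ∧ f ∈ fs ∧ Sub f (st.next + k) g) := by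
  induction hg with
  | nil u => exact ⟨[u], [], .nil u, by simp, by simp, by simp, by simp, by simp⟩
  | @cons u v w S fs f hf hu hv hne hg ih =>
    rw [List.nodup_cons] at hS hfs
    obtain ⟨S', fs', hg', hS', hfs', hl, hSm, hfm⟩ :=
      ih hS.2 hfs.2 (fun x hx => hlt x (List.mem_cons_of_mem _ hx))
    obtain ⟨k, hk⟩ := List.mem_iff_getElem?.1 hf
    obtain ⟨g1, g2, s1, s2, hgne, i1, i2, i3, i4⟩ := split (h.dist f hf) (st.next + k) hu hv hne
    have hul := h.flt f hf u hu
    have hvl := h.flt f hf v hv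
    have third : ∀ {f' g : ℕ × ℕ × ℕ} {w : ℕ}, Sub f' w g → g.2.2 = w := by
      rintro f' g w (rfl | rfl | rfl) <;> rfl
    have hnew : ∀ g, Sub f (st.next + k) g → g ∉ fs' := by
      intro g hs hgm
      obtain ⟨k', f', hk', hf', hs'⟩ := hfm g hgm
      have e1 := third hs
      have e2 := third hs'
      obtain rfl : k = k' := by omega
      rw [hk] at hk'
      obtain rfl := Option.some.inj hk'
      exact hfs.1 hf'
    refine ⟨u :: (st.next + k) :: S', g1 :: g2 :: fs',
      .cons g1 ((mem_faces _ _).2 ⟨k, f, hk, s1⟩) i1 i2 (by omega)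
        (.cons g2 ((mem_faces _ _).2 ⟨k, f, hk, s2⟩) i3 i4 (by omega) hg'), ?_, ?_, ?_, ?_, ?_⟩
    · rw [List.nodup_cons, List.nodup_cons, List.mem_cons]
      refine ⟨?_, ?_, hS'⟩
      · rintro (h1 | h1)
        · omega
        · rcases hSm u h1 with h2 | ⟨k', f', _, _, h2⟩
          · exact hS.1 h2
          · omega
      · intro h1
        rcases hSm _ h1 with h2 | ⟨k', f', hk', hf', h2⟩
        · have := hlt _ (List.mem_cons_of_mem _ h2); omega
        · obtain rfl : k = k' := by omega
          rw [hk] at hk'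
          obtain rfl := Option.some.inj hk'
          exact hfs.1 hf'
    · rw [List.nodup_cons, List.nodup_cons, List.mem_cons, not_or]
      exact ⟨⟨hgne, hnew _ s1⟩, hnew _ s2, hfs'⟩
    · simp only [List.length_cons, hl]; omega
    · intro x hx
      rcases List.mem_cons.1 hx with rfl | hx
      · exact Or.inl (by simp)
      rcases List.mem_cons.1 hx with rfl | hx
      · exact Or.inr ⟨k, f, hk, by simp, rfl⟩
      rcases hSm x hx with h1 | ⟨k', f', hk', hf', h2⟩
      · exact Or.inl (List.mem_cons_of_mem _ h1)
      · exact Or.inr ⟨k', f', hk', List.mem_cons_of_mem _ hf', h2⟩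
    · intro x hx
      rcases List.mem_cons.1 hx with rfl | hx
      · exact ⟨k, f, hk, by simp, s1⟩
      rcases List.mem_cons.1 hx with rfl | hx
      · exact ⟨k, f, hk, by simp, s2⟩
      obtain ⟨k', f', hk', hf', h2⟩ := hfm x hx
      exact ⟨k', f', hk', List.mem_cons_of_mem _ hf', h2⟩

theorem main (n : ℕ) : Inv (MMstep^[n] MMinit) ∧ 2 ≤ (MMstep^[n] MMinit).next ∧
    (∀ p : (Gr (MMstep^[n] MMinit)).Walk 0 1, p.IsPath → p.length ≤ 3 * 2 ^ n) ∧
    ∃ S fs, Good (MMstep^[n] MMinit) 0 1 S fs ∧ S.Nodup ∧ fs.Nodup ∧ fs.length = 3 * 2 ^ n := by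
  induction n with
  | zero =>
    refine ⟨inv_init, by simp [MMinit], ?_, [0, 2, 3, 1], [(0, 2, 3), (1, 2, 3), (0, 1, 3)],
      ?_, by simp, by simp, by simp⟩
    · intro p hp
      have h1 := support_lt inv_init p (by simp [MMinit])
      have h2 : p.support.toFinset ⊆ Finset.range 4 := by
        intro x hx
        have := h1 x (by simpa using hx)
        simpa [MMinit] using this
      have h3 := Finset.card_le_card h2
      rw [List.toFinset_card_of_nodup hp.support_nodup, SimpleGraph.Walk.length_support] at h3
      simp only [Finset.card_range] at h3
      simp only [pow_zero]
      omega
    · refine .cons (v := 2) _ (by simp [MMinit]) (by simp [In]) (by simp [In]) (by simp) ?_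
      refine .cons (v := 3) _ (by simp [MMinit]) (by simp [In]) (by simp [In]) (by simp) ?_
      exact .cons (v := 1) _ (by simp [MMinit]) (by simp [In]) (by simp [In]) (by simp) (.nil 1)
  | succ n ih =>
    rw [Function.iterate_succ_apply']
    generalize MMstep^[n] MMinit = st at ih
    obtain ⟨hi, h2, hub, S, fs, hg, hS, hfs, hl⟩ := ih
    refine ⟨inv_step hi, ?_, ?_, ?_⟩
    · have : (MMstep st).next = st.next + st.faces.length := rfl
      omega
    · intro p hp
      obtain ⟨q, hq, -, hle⟩ := contract hi _ p le_rfl hp (by omega) (by omega)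
      have := hub q hq
      rw [pow_succ]; omega
    · obtain ⟨p, hp, -⟩ := hg.walk hi
      have hlt : ∀ x ∈ S, x < st.next := by
        rw [← hp]; exact support_lt hi p (by omega)
      obtain ⟨S', fs', hg', hS', hfs', hl', -, -⟩ := hg.step hi hS hfs hlt
      exact ⟨S', fs', hg', hS', hfs', by rw [hl', hl, pow_succ]; omega⟩

end MMaux

/-- (Chen–Yu) For every integer `i ≥ 2`, the length of the longest path between the
outer vertices `x = 0` and `y = 1` in the Moon–Moser graph `T_i` is exactly `3·2^(i-1)`:
every `x`–`y` path in `T_i` has length at most `3·2^(i-1)`, and some `x`–`y` path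
attains this length. -/
theorem moonMoser_longest_xy_path (i : ℕ) (hi : 2 ≤ i) :
    (∀ p : (MoonMoser i).Walk 0 1, p.IsPath → p.length ≤ 3 * 2 ^ (i - 1)) ∧
    (∃ p : (MoonMoser i).Walk 0 1, p.IsPath ∧ p.length = 3 * 2 ^ (i - 1)) := by
  obtain ⟨hi, -, hub, S, fs, hg, hS, -, hl⟩ := MMaux.main (i - 1)
  refine ⟨hub, ?_⟩
  obtain ⟨p, hp, hpl⟩ := hg.walk hi
  have hpath : p.IsPath := by rw [SimpleGraph.Walk.isPath_def, hp]; exact hS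
  exact ⟨p, hpath, hpl.trans hl⟩
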